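/- Let (Ω,Σ,P) be a probability space whose measure P has the Darboux property, and let m : Σ → ℝ be a finitely-additive set function absolutely continuous with respect to P. Then the additive partition entropy L_m, L_m(𝒜) := Σ_{A∈𝒜} m(A)·log₂(1/P(A)), depends solely on the measures of atoms if and only if m = α·P for some α ∈ ℝ. -/

import Mathlib

/-!
If `m = α·P`, then `L_m` is a sum over the atoms of a function of their measures.

Conversely, compare the partitions `{A, Aᶜ}` and `{B, Bᶜ}` with `P A = P B = t`, `0 < t < 1`:
equality of the two entropies reads `(m A - m B) · (log (1/t) - log (1/(1-t))) = 0`, so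
`m A = m B` unless `t = 1/2`, and a set of measure `1/2` is cut into two sets of measure `1/4`.
Hence `m A` depends only on `P A` (`m_eq_of_measure_eq`). Cutting sets into pieces of
measure `1/n` (`exists_remainder`) gives `m A = (k/n)·m Ω + m R` with `k = ⌊n·P A⌋` and
`P R < 1/n`, and absolute continuity lets `n → ∞`, so `α = m Ω` works.
-/

open MeasureTheory Filter Topology

namespace APE

variable {Ω : Type*} [MeasurableSpace Ω]

/-- A finite measurable partition of `Ω`: a finite collection of nonempty pairwise
disjoint measurable sets whose union is `Ω`. -/
def IsFinPart (𝒜 : Finset (Set Ω)) : Prop :=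
  (∀ A ∈ 𝒜, MeasurableSet A) ∧ (∀ A ∈ 𝒜, A ≠ ∅) ∧
    (𝒜 : Set (Set Ω)).PairwiseDisjoint id ∧ ⋃₀ (𝒜 : Set (Set Ω)) = Set.univ

/-- The join (common refinement) `𝒜 ∨ ℬ` of two finite partitions. -/
noncomputable def join (𝒜 ℬ : Finset (Set Ω)) : Finset (Set Ω) := by
  classical
  exact ((𝒜 ×ˢ ℬ).image fun p => p.1 ∩ p.2).filter fun s => s ≠ ∅

/-- Stochastic independence `𝒜 ⊥ ℬ` of two finite partitions. -/
def Indep (P : Measure Ω) (𝒜 ℬ : Finset (Set Ω)) : Prop :=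
  ∀ A ∈ 𝒜, ∀ B ∈ ℬ, P (A ∩ B) = P A * P B

/-- An additive partition entropy: `I (𝒜·ℬ) = I 𝒜 + I ℬ` for independent partitions. -/
def IsAPE (P : Measure Ω) (I : Finset (Set Ω) → ℝ) : Prop :=
  ∀ 𝒜 ℬ : Finset (Set Ω), IsFinPart 𝒜 → IsFinPart ℬ → Indep P 𝒜 ℬ →
    I (join 𝒜 ℬ) = I 𝒜 + I ℬ

/-- Restriction `𝒜|S` of a partition to a set `S`. -/
noncomputable def restr (𝒜 : Finset (Set Ω)) (S : Set Ω) : Finset (Set Ω) := by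
  classical
  exact (𝒜.image fun A => A ∩ S).filter fun s => s ≠ ∅

/-- The number `N(𝒜)` of atoms of positive measure. -/
noncomputable def numPos (P : Measure Ω) (𝒜 : Finset (Set Ω)) : ℕ := by
  classical
  exact (𝒜.filter fun A => 0 < P A).card

/-- The pseudometric `D` on finite partitions. -/
noncomputable def Ddist (P : Measure Ω) (𝒜 ℬ : Finset (Set Ω)) : ℝ :=
  sInf ((fun Z => (P Z).toReal) ''
      {Z : Set Ω | MeasurableSet Z ∧ restr 𝒜 Zᶜ = restr ℬ Zᶜ}) +
    |(numPos P 𝒜 : ℝ) - (numPos P ℬ : ℝ)|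

/-- Continuity of `I` with respect to the pseudometric `D`. -/
def CtsD (P : Measure Ω) (I : Finset (Set Ω) → ℝ) : Prop :=
  ∀ 𝒜 : Finset (Set Ω), IsFinPart 𝒜 → ∀ ε : ℝ, 0 < ε → ∃ δ : ℝ, 0 < δ ∧
    ∀ ℬ : Finset (Set Ω), IsFinPart ℬ → Ddist P 𝒜 ℬ < δ → |I ℬ - I 𝒜| < ε

/-- The two-atom partition `{A, Ω ∖ A}`. -/
noncomputable def twoPart (A : Set Ω) : Finset (Set Ω) := by
  classical
  exact {A, Aᶜ}

/-- Continuity of `I` on the family `𝔄₂` of two-atom partitions. -/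
def CtsOnA2 (P : Measure Ω) (I : Finset (Set Ω) → ℝ) : Prop :=
  ∀ (A : Set Ω) (As : ℕ → Set Ω), MeasurableSet A → (∀ n, MeasurableSet (As n)) →
    0 < P A → P A < 1 →
    Tendsto (fun n => (P (symmDiff A (As n))).toReal) atTop (𝓝 0) →
    Tendsto (fun n => I (twoPart (As n))) atTop (𝓝 (I (twoPart A)))

/-- The Darboux property of a measure. -/
def Darboux (P : Measure Ω) : Prop :=
  ∀ A : Set Ω, MeasurableSet A → ∀ θ : ENNReal, 0 < θ → θ < P A →
    ∃ B : Set Ω, MeasurableSet B ∧ B ⊆ A ∧ P B = θ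

/-- Nonatomicity of a measure. -/
def NonAtomic (P : Measure Ω) : Prop :=
  ∀ A : Set Ω, MeasurableSet A → 0 < P A →
    ∃ B : Set Ω, MeasurableSet B ∧ B ⊆ A ∧ 0 < P B ∧ P B < P A

/-- A finitely additive real set function on measurable sets. -/
def FinAdd (m : Set Ω → ℝ) : Prop :=
  ∀ A B : Set Ω, MeasurableSet A → MeasurableSet B → Disjoint A B →
    m (A ∪ B) = m A + m B

/-- A countably additive real set function on measurable sets. -/
def CountAdd (m : Set Ω → ℝ) : Prop :=
  ∀ f : ℕ → Set Ω, (∀ n, MeasurableSet (f n)) →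
    (∀ i j, i ≠ j → Disjoint (f i) (f j)) →
    HasSum (fun n => m (f n)) (m (⋃ n, f n))

/-- Absolute continuity of `m` with respect to `P`. -/
def AbsCont (P : Measure Ω) (m : Set Ω → ℝ) : Prop :=
  ∀ ε : ℝ, 0 < ε → ∃ δ : ℝ, 0 < δ ∧
    ∀ A : Set Ω, MeasurableSet A → (P A).toReal < δ → |m A| < ε

/-- The entropy `L_m(𝒜) = Σ_{A∈𝒜} m(A)·log₂(1/P(A))`.  (If `P A = 0` then the
corresponding term vanishes: `m A = 0` for `m` vanishing on null sets, which
implements the convention `0·(+∞) = 0`.) -/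
noncomputable def Lm (P : Measure Ω) (m : Set Ω → ℝ) (𝒜 : Finset (Set Ω)) : ℝ :=
  ∑ A ∈ 𝒜, m A * Real.logb 2 (1 / (P A).toReal)

/-- Two partitions have the same measures of atoms. -/
def SameMeasures (P : Measure Ω) (𝒜 ℬ : Finset (Set Ω)) : Prop :=
  ∃ e : {A : Set Ω // A ∈ 𝒜} ≃ {B : Set Ω // B ∈ ℬ}, ∀ A, P (e A).1 = P A.1

/-- `I` depends solely on the measures of atoms. -/
def DependsOnMeasures (P : Measure Ω) (I : Finset (Set Ω) → ℝ) : Prop :=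
  ∀ 𝒜 ℬ : Finset (Set Ω), IsFinPart 𝒜 → IsFinPart ℬ → SameMeasures P 𝒜 ℬ → I 𝒜 = I ℬ

/-- The operation `T_{V,W}`, replacing the atom `A₁ ⊇ V` by `(A₁∖V)∪W` and the atom
`A₂ ⊇ W` by `(A₂∖W)∪V`. -/
noncomputable def swap (V W A₁ A₂ : Set Ω) (𝒜 : Finset (Set Ω)) : Finset (Set Ω) := by
  classical
  exact insert ((A₁ \ V) ∪ W) (insert ((A₂ \ W) ∪ V) ((𝒜.erase A₁).erase A₂))

/-- `ε(λ) = min (1/(1+λ)) (1/(1+λ⁻¹))`. -/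
noncomputable def epsFun (lam : ℝ) : ℝ := min (1 / (1 + lam)) (1 / (1 + lam⁻¹))

/-- An indexed finite measurable partition. -/
def IsPartIdx {n : ℕ} (A : Fin n → Set Ω) : Prop :=
  (∀ i, MeasurableSet (A i)) ∧ (∀ i, A i ≠ ∅) ∧
    (∀ i j, i ≠ j → Disjoint (A i) (A j)) ∧ (⋃ i, A i) = Set.univ

/-- The finset of atoms of an indexed partition. -/
noncomputable def idxFinset {n : ℕ} (A : Fin n → Set Ω) : Finset (Set Ω) := by
  classical
  exact Finset.univ.image A

/-- The two-atom family `{A, B}`. -/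
noncomputable def pairPart (A B : Set Ω) : Finset (Set Ω) := by
  classical
  exact {A, B}

/-- Membership of `𝒜` in `F_λ(V,W)`, with designated distinct atoms `A₁ ⊇ V`,
`A₂ ⊇ W` such that `P(A₂)/P(A₁) = λ`. -/
def memF (P : Measure Ω) (V W : Set Ω) (lam : ℝ) (𝒜 : Finset (Set Ω))
    (A₁ A₂ : Set Ω) : Prop :=
  IsFinPart 𝒜 ∧ A₁ ∈ 𝒜 ∧ A₂ ∈ 𝒜 ∧ A₁ ≠ A₂ ∧ V ⊆ A₁ ∧ W ⊆ A₂ ∧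
    (P A₂).toReal / (P A₁).toReal = lam

/-- Measurable sets with rational measure. -/
def InRat (P : Measure Ω) (A : Set Ω) : Prop :=
  MeasurableSet A ∧ ∃ q : ℚ, (P A).toReal = (q : ℝ)

/-- The characteristic properties of `Δ(V,W,λ)` associated with an additive
partition entropy `I` (Proposition 3 of the paper). -/
def DeltaSpec (P : Measure Ω) (I : Finset (Set Ω) → ℝ)
    (Δ : Set Ω → Set Ω → ℝ → ℝ) : Prop :=
  (∀ V W : Set Ω, ∀ lam : ℝ, MeasurableSet V → MeasurableSet W → P V = P W →
      0 < lam → Disjoint V W →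
      ∀ 𝒜 A₁ A₂, memF P V W lam 𝒜 A₁ A₂ →
        Δ V W lam = I (swap V W A₁ A₂ 𝒜) - I 𝒜) ∧
  (∀ U V W : Set Ω, ∀ lam : ℝ, MeasurableSet U → MeasurableSet V → MeasurableSet W →
      P U = P V → P V = P W → 0 < lam →
      Δ U W lam = Δ U V lam + Δ V W lam) ∧
  (∀ V₁ V₂ W₁ W₂ : Set Ω, ∀ lam : ℝ, MeasurableSet V₁ → MeasurableSet V₂ →
      MeasurableSet W₁ → MeasurableSet W₂ → Disjoint V₁ V₂ → Disjoint W₁ W₂ →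
      P V₁ = P W₁ → P V₂ = P W₂ → 0 < lam →
      Δ (V₁ ∪ V₂) (W₁ ∪ W₂) lam = Δ V₁ W₁ lam + Δ V₂ W₂ lam) ∧
  (∀ V W : Set Ω, ∀ kap lam : ℝ, MeasurableSet V → MeasurableSet W → P V = P W →
      0 < kap → 0 < lam →
      Δ V W (kap * lam) = Δ V W kap + Δ V W lam)

/-! ### Finite additivity and two-atom partitions -/

section Helpers

variable {Ω : Type*} [MeasurableSpace Ω] {P : Measure Ω} {m : Set Ω → ℝ}

lemma FinAdd.eq_add_diff (hadd : FinAdd m) {A B : Set Ω} (hA : MeasurableSet A)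
    (hB : MeasurableSet B) (hBA : B ⊆ A) : m A = m B + m (A \ B) := by
  rw [← hadd B (A \ B) hB (hA.diff hB) Set.disjoint_sdiff_right, Set.union_sdiff_cancel hBA]

lemma AbsCont.eq_zero (hac : AbsCont P m) {A : Set Ω} (hA : MeasurableSet A)
    (h : P.real A = 0) : m A = 0 := by
  by_contra hne
  obtain ⟨δ, hδ, H⟩ := hac |m A| (abs_pos.2 hne)
  exact lt_irrefl _ (H A hA (lt_of_eq_of_lt h hδ))

lemma isFinPart_twoPart {A : Set Ω} (hA : MeasurableSet A) (h0 : A ≠ ∅) (h1 : Aᶜ ≠ ∅) :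
    IsFinPart (twoPart A) := by
  refine ⟨?_, ?_, ?_, ?_⟩
  · simp [twoPart, hA]
  · simp only [twoPart, Finset.mem_insert, Finset.mem_singleton]
    rintro B (rfl | rfl) <;> assumption
  · simp only [twoPart, Finset.coe_insert, Finset.coe_singleton]
    exact Set.pairwise_pair.2 fun _ => ⟨disjoint_compl_right, disjoint_compl_left⟩
  · simp [twoPart]

lemma ne_compl_of_ne_empty {X : Type*} {A : Set X} (h0 : A ≠ ∅) : A ≠ Aᶜ := by
  intro h
  obtain ⟨x, hx⟩ := Set.nonempty_iff_ne_empty.2 h0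
  exact (h ▸ hx : x ∈ Aᶜ) hx

variable [IsProbabilityMeasure P]

/-- The Darboux property for real-valued measures, with both endpoints allowed. -/
lemma Darboux.exists_real (hD : Darboux P) {A : Set Ω} (hA : MeasurableSet A) {θ : ℝ}
    (h0 : 0 ≤ θ) (h1 : θ ≤ P.real A) :
    ∃ B, MeasurableSet B ∧ B ⊆ A ∧ P.real B = θ := by
  rcases h0.eq_or_lt with rfl | h0
  · exact ⟨∅, MeasurableSet.empty, Set.empty_subset _, by simp⟩
  rcases h1.eq_or_lt with rfl | h1
  · exact ⟨A, hA, subset_rfl, rfl⟩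
  obtain ⟨B, hB, hBA, hPB⟩ := hD A hA (ENNReal.ofReal θ) (by simpa using h0)
    ((ENNReal.ofReal_lt_iff_lt_toReal h0.le (measure_ne_top P A)).2 h1)
  exact ⟨B, hB, hBA, by simp [Measure.real, hPB, h0.le]⟩

lemma sameMeasures_twoPart {A B : Set Ω} (hA : MeasurableSet A) (hB : MeasurableSet B)
    (hA0 : A ≠ ∅) (hB0 : B ≠ ∅) (h : P A = P B) :
    SameMeasures P (twoPart A) (twoPart B) := by
  classical
  have hAc := ne_compl_of_ne_empty hA0
  have hBc := ne_compl_of_ne_empty hB0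
  have hc : P Aᶜ = P Bᶜ := by
    rw [prob_compl_eq_one_sub hA, prob_compl_eq_one_sub hB, h]
  refine ⟨{ toFun := fun x => if x.1 = A then ⟨B, by simp [twoPart]⟩
                else ⟨Bᶜ, by simp [twoPart]⟩
            invFun := fun x => if x.1 = B then ⟨A, by simp [twoPart]⟩
                else ⟨Aᶜ, by simp [twoPart]⟩
            left_inv := ?_
            right_inv := ?_ }, ?_⟩
  · rintro ⟨x, hx⟩
    simp only [twoPart, Finset.mem_insert, Finset.mem_singleton] at hx
    rcases hx with rfl | rfl
    · simp
    · simp [hAc.symm, hBc.symm]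
  · rintro ⟨x, hx⟩
    simp only [twoPart, Finset.mem_insert, Finset.mem_singleton] at hx
    rcases hx with rfl | rfl
    · simp
    · simp [hAc.symm, hBc.symm]
  · rintro ⟨x, hx⟩
    simp only [twoPart, Finset.mem_insert, Finset.mem_singleton] at hx
    rcases hx with rfl | rfl
    · simp [h]
    · simp [hAc.symm, hc]

lemma Lm_twoPart (hadd : FinAdd m) {A : Set Ω} (hA : MeasurableSet A) (h0 : A ≠ ∅) :
    Lm P m (twoPart A) = m A * Real.logb 2 (1 / P.real A) +
      (m Set.univ - m A) * Real.logb 2 (1 / (1 - P.real A)) := by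
  classical
  have h := hadd.eq_add_diff MeasurableSet.univ hA (Set.subset_univ A)
  rw [← Set.compl_eq_univ_sdiff] at h
  rw [← probReal_compl_eq_one_sub hA, h, Lm, twoPart,
    Finset.sum_pair (ne_compl_of_ne_empty h0), add_sub_cancel_left]
  rfl

/-! ### `m A` is a function of `P A` -/

/-- The comparison of two-atom partitions settles every measure `t ∈ (0,1)` except `1/2`,
where `log (1/t) = log (1/(1-t))` and the comparison is vacuous. -/
lemma m_eq_of_measure_eq_aux (hadd : FinAdd m) (h : DependsOnMeasures P (Lm P m))
    {A B : Set Ω} (hA : MeasurableSet A) (hB : MeasurableSet B) (hAB : P.real A = P.real B)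
    (h0 : 0 < P.real A) (h1 : P.real A < 1) (h2 : P.real A ≠ 1 / 2) : m A = m B := by
  have ne {S : Set Ω} (hS : MeasurableSet S) (h0 : 0 < P.real S) (h1 : P.real S < 1) :
      S ≠ ∅ ∧ Sᶜ ≠ ∅ := by
    refine ⟨?_, ?_⟩ <;> intro hE
    · simp [hE] at h0
    · have := probReal_compl_eq_one_sub (μ := P) hS
      rw [hE, measureReal_empty] at this
      linarith
  obtain ⟨hA0, hA1⟩ := ne hA h0 h1
  obtain ⟨hB0, hB1⟩ := ne hB (hAB ▸ h0) (hAB ▸ h1)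
  have hP : P A = P B := (measureReal_eq_measureReal_iff).1 hAB
  have key := h _ _ (isFinPart_twoPart hA hA0 hA1) (isFinPart_twoPart hB hB0 hB1)
    (sameMeasures_twoPart hA hB hA0 hB0 hP)
  rw [Lm_twoPart hadd hA hA0, Lm_twoPart hadd hB hB0, ← hAB] at key
  have hlog : Real.logb 2 (1 / P.real A) ≠ Real.logb 2 (1 / (1 - P.real A)) := by
    intro hl
    have := Real.logb_injOn_pos one_lt_two (Set.mem_Ioi.2 (one_div_pos.2 h0))
      (Set.mem_Ioi.2 (one_div_pos.2 (sub_pos.2 h1))) hl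
    rw [one_div, one_div, inv_inj] at this
    exact h2 (by linarith)
  have : (m A - m B) * (Real.logb 2 (1 / P.real A) - Real.logb 2 (1 / (1 - P.real A))) = 0 := by
    linear_combination key
  rcases mul_eq_zero.1 this with h | h
  · exact sub_eq_zero.1 h
  · exact absurd (sub_eq_zero.1 h) hlog

/-- If `L_m` depends solely on the measures of atoms, then `m A` depends only on `P A`. -/
lemma m_eq_of_measure_eq (hD : Darboux P) (hadd : FinAdd m) (hac : AbsCont P m)
    (h : DependsOnMeasures P (Lm P m)) {A B : Set Ω} (hA : MeasurableSet A)
    (hB : MeasurableSet B) (hAB : P.real A = P.real B) : m A = m B := by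
  rcases (measureReal_nonneg (μ := P) (s := A)).eq_or_lt with h0 | h0
  · rw [hac.eq_zero hA h0.symm, hac.eq_zero hB (hAB ▸ h0.symm)]
  rcases (measureReal_le_one (μ := P) (s := A)).eq_or_lt with h1 | h1
  · have full {S : Set Ω} (hS : MeasurableSet S) (h1 : P.real S = 1) : m S = m Set.univ := by
      have hz := hac.eq_zero hS.compl (by rw [probReal_compl_eq_one_sub hS, h1, sub_self])
      rw [hadd.eq_add_diff MeasurableSet.univ hS (Set.subset_univ S),
        ← Set.compl_eq_univ_sdiff, hz, add_zero]
    rw [full hA h1, full hB (hAB ▸ h1)]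
  by_cases h2 : P.real A = 1 / 2
  · obtain ⟨A', hA', hAA, hPA⟩ := hD.exists_real hA (θ := 1 / 4) (by norm_num)
      (by rw [h2]; norm_num)
    obtain ⟨B', hB', hBB, hPB⟩ := hD.exists_real hB (θ := 1 / 4) (by norm_num)
      (by rw [← hAB, h2]; norm_num)
    have hPA2 := measureReal_sdiff (μ := P) hAA hA'
    have hPB2 := measureReal_sdiff (μ := P) hBB hB'
    rw [hadd.eq_add_diff hA hA' hAA, hadd.eq_add_diff hB hB' hBB]
    congr 1
    · exact m_eq_of_measure_eq_aux hadd h hA' hB' (by linarith) (by linarith) (by linarith)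
        (by rw [hPA]; norm_num)
    · have h4 : P.real (A \ A') = 1 / 4 := by linarith
      exact m_eq_of_measure_eq_aux hadd h (hA.diff hA') (hB.diff hB') (by linarith)
        (by linarith) (by linarith) (by rw [h4]; norm_num)
  · exact m_eq_of_measure_eq_aux hadd h hA hB hAB h0 h1 h2

/-! ### Linearity -/

/-- Euclidean division of `A` by `C`: `k` sets of the same measure as `C` can be removed
from `A` as long as `k · P C ≤ P A`, and each of them has the same value of `m` as `C`. -/
lemma exists_remainder (hD : Darboux P) (hadd : FinAdd m)
    (hm : ∀ A B, MeasurableSet A → MeasurableSet B → P.real A = P.real B → m A = m B)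
    {C : Set Ω} (hC : MeasurableSet C) (k : ℕ) {A : Set Ω} (hA : MeasurableSet A)
    (hk : k * P.real C ≤ P.real A) :
    ∃ R, MeasurableSet R ∧ P.real R = P.real A - k * P.real C ∧ m A = k * m C + m R := by
  induction k with
  | zero => exact ⟨A, hA, by simp, by simp⟩
  | succ k ih =>
    have hC0 : 0 ≤ P.real C := measureReal_nonneg
    push_cast at hk ⊢
    obtain ⟨R, hR, hPR, hmR⟩ := ih (by linarith)
    obtain ⟨B, hB, hBR, hPB⟩ := hD.exists_real hR hC0 (by linarith)
    refine ⟨R \ B, hR.diff hB, ?_, ?_⟩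
    · rw [measureReal_sdiff hBR hB]
      linarith
    · rw [hmR, hadd.eq_add_diff hR hB hBR, hm B C hB hC hPB]
      ring

/-- With pieces of measure `c = 1/(n+1)` removed from `A`, the defect `m A - m Ω · P A` equals
`m R - m Ω · P R` for a remainder with `P R < c`, which is arbitrarily small. -/
lemma proportional_of_dependsOnMeasures (hD : Darboux P) (hadd : FinAdd m)
    (hac : AbsCont P m) (h : DependsOnMeasures P (Lm P m)) {A : Set Ω}
    (hA : MeasurableSet A) : m A = m Set.univ * P.real A := by
  have hm : ∀ A B, MeasurableSet A → MeasurableSet B → P.real A = P.real B → m A = m B :=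
    fun A B hA hB hAB => m_eq_of_measure_eq hD hadd hac h hA hB hAB
  set α := m Set.univ
  refine eq_of_abs_sub_le_all fun ε hε => ?_
  obtain ⟨δ, hδ, H⟩ := hac (ε / 2) (half_pos hε)
  -- `c = 1/(n+1)` must be below `δ` for `m R`, and below `ε / (2 (|α| + 1))` for `α · P R`.
  obtain ⟨n, hn⟩ := exists_nat_one_div_lt (K := ℝ)
    (lt_min hδ (div_pos (half_pos hε) (by positivity : 0 < |α| + 1)))
  obtain ⟨hn1, hn2⟩ := lt_min_iff.1 hn
  set c : ℝ := 1 / ((n : ℝ) + 1) with hc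
  have hn0 : 0 < (n : ℝ) + 1 := by positivity
  have hc0 : 0 < c := by positivity
  have hnc : ((n + 1 : ℕ) : ℝ) * c = 1 := by
    push_cast
    rw [hc]
    field_simp
  obtain ⟨C, hC, -, hPC⟩ := hD.exists_real MeasurableSet.univ (θ := c) hc0.le (by
    rw [probReal_univ, hc, div_le_one hn0]
    linarith [(Nat.cast_nonneg n : (0 : ℝ) ≤ n)])
  have hmC : α = ((n + 1 : ℕ) : ℝ) * m C := by
    obtain ⟨R, hR, hPR, hmR⟩ := exists_remainder hD hadd hm hC (n + 1) MeasurableSet.univ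
      (by rw [hPC, hnc, probReal_univ])
    rw [hPC, hnc, probReal_univ, sub_self] at hPR
    rw [hac.eq_zero hR hPR, add_zero] at hmR
    exact hmR
  have hmC' : m C = α * c := by
    rw [hmC, mul_right_comm, hnc, one_mul]
  obtain ⟨R, hR, hPR, hmR⟩ := exists_remainder hD hadd hm hC ⌊P.real A / c⌋₊ hA (by
    rw [hPC, ← le_div_iff₀ hc0]
    exact Nat.floor_le (by positivity))
  rw [hPC] at hPR
  have hRc : P.real R < c := by
    have := Nat.lt_floor_add_one (P.real A / c)
    rw [div_lt_iff₀ hc0] at this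
    linarith
  have hdiff : m A - α * P.real A = m R - α * P.real R := by
    rw [hmR, hPR, hmC']
    ring
  have h1 : |m R| < ε / 2 := H R hR (hRc.trans hn1)
  have h2 : |α * P.real R| ≤ ε / 2 := by
    rw [lt_div_iff₀ (by positivity)] at hn2
    rw [abs_mul, abs_of_nonneg measureReal_nonneg]
    nlinarith [abs_nonneg α]
  rw [hdiff]
  linarith [abs_sub (m R) (α * P.real R)]

end Helpers

/-- `L_m` depends solely on the measures of atoms iff
`m = α·P` for some real `α`. -/
theorem Lm_dependsOnMeasures_iff_proportional
    {Ω : Type*} [MeasurableSpace Ω] (P : Measure Ω) [IsProbabilityMeasure P]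
    (hD : Darboux P) (m : Set Ω → ℝ) (hadd : FinAdd m) (hac : AbsCont P m) :
    DependsOnMeasures P (Lm P m) ↔
      ∃ α : ℝ, ∀ A : Set Ω, MeasurableSet A → m A = α * (P A).toReal := by
  refine ⟨fun h => ⟨m Set.univ, fun A hA =>
    proportional_of_dependsOnMeasures hD hadd hac h hA⟩, ?_⟩
  rintro ⟨α, hα⟩ 𝒜 ℬ h𝒜 hℬ ⟨e, he⟩
  unfold Lm
  rw [← Finset.sum_coe_sort 𝒜, ← Finset.sum_coe_sort ℬ]
  refine Fintype.sum_equiv e _ _ fun A => ?_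
  rw [hα _ (h𝒜.1 _ A.2), hα _ (hℬ.1 _ (e A).2), he A]

end APE
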